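/- Let C be a group system, t ∈ ℤ, and k ≥ 1. Then Δ_{k−1}^t is a normal subgroup of Δ_k^t, and for every j with 0 ≤ j ≤ k there are isomorphisms Δ_k^t/Δ_{k−1}^t ≅ π^{[t,t+k]}(D_k^t)/π^{[t,t+k]}(D_{k−1}^t) ≅ β^{t+j}(D_k^t)/β^{t+j}(D_{k−1}^t). In particular, all the quotient groups β^{t+j}(D_k^t)/β^{t+j}(D_{k−1}^t) for 0 ≤ j ≤ k have the same cardinality. -/

import Mathlib

open scoped Pointwise

namespace GroupSystemPaper

variable {A : ℤ → Type*} [∀ t, Group (A t)]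

/-- `C^{t+}` : codewords of the group system `C` that are the identity before time `t`. -/
def Cplus (C : Subgroup (∀ t, A t)) (t : ℤ) : Subgroup C where
  carrier := {a | ∀ n < t, (a : ∀ s, A s) n = 1}
  one_mem' := by intro n hn; simp
  mul_mem' := by intro a b ha hb n hn; simp [ha n hn, hb n hn]
  inv_mem' := by intro a ha n hn; simp [ha n hn]

/-- `C^{t−}` : codewords of the group system `C` that are the identity from time `t` on. -/
def Cminus (C : Subgroup (∀ t, A t)) (t : ℤ) : Subgroup C where
  carrier := {a | ∀ n, t ≤ n → (a : ∀ s, A s) n = 1}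
  one_mem' := by intro n hn; simp
  mul_mem' := by intro a b ha hb n hn; simp [ha n hn, hb n hn]
  inv_mem' := by intro a ha n hn; simp [ha n hn]

/-- `C^{[t₁,t₂]}` : codewords supported on the interval `[t₁, t₂]`. -/
def Cint (C : Subgroup (∀ t, A t)) (t₁ t₂ : ℤ) : Subgroup C :=
  Cplus C t₁ ⊓ Cminus C (t₂ + 1)

instance Cplus_normal (C : Subgroup (∀ t, A t)) (t : ℤ) : (Cplus C t).Normal := by
  constructor
  intro x hx g n hn
  have h1 : (x : ∀ s, A s) n = 1 := hx n hn
  simp [h1]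

instance Cminus_normal (C : Subgroup (∀ t, A t)) (t : ℤ) : (Cminus C t).Normal := by
  constructor
  intro x hx g n hn
  have h1 : (x : ∀ s, A s) n = 1 := hx n hn
  simp [h1]

instance Cint_normal (C : Subgroup (∀ t, A t)) (t₁ t₂ : ℤ) : (Cint C t₁ t₂).Normal := by
  constructor
  intro x hx g
  rcases Subgroup.mem_inf.mp hx with ⟨h1, h2⟩
  exact Subgroup.mem_inf.mpr
    ⟨(Cplus_normal C t₁).conj_mem _ h1 g, (Cminus_normal C (t₂ + 1)).conj_mem _ h2 g⟩

/-- The normal subgroup `C^{t−}C^{t+}` of `C`. -/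
def stateN (C : Subgroup (∀ t, A t)) (t : ℤ) : Subgroup C :=
  Cminus C t ⊔ Cplus C t

instance stateN_normal (C : Subgroup (∀ t, A t)) (t : ℤ) : (stateN C t).Normal :=
  Subgroup.sup_normal _ _

/-- The canonical state space `Σ^t = C/(C^{t−}C^{t+})`. -/
abbrev State (C : Subgroup (∀ t, A t)) (t : ℤ) : Type _ :=
  ↥C ⧸ stateN C t

/-- The state projection `σ^t : C → Σ^t`. -/
def sigma (C : Subgroup (∀ t, A t)) (t : ℤ) : ↥C →* State C t :=
  QuotientGroup.mk' (stateN C t)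

/-- The evaluation homomorphism `χ^t : C → A^t`. -/
def evalHom (C : Subgroup (∀ t, A t)) (t : ℤ) : ↥C →* A t :=
  (Pi.evalMonoidHom A t).comp C.subtype

/-- The branch homomorphism `β^t : C → Σ^t × A^t × Σ^{t+1}`. -/
def beta (C : Subgroup (∀ t, A t)) (t : ℤ) :
    ↥C →* State C t × A t × State C (t + 1) :=
  (sigma C t).prod ((evalHom C t).prod (sigma C (t + 1)))

/-- The branch group `B^t = β^t(C)`. -/
def Branch (C : Subgroup (∀ t, A t)) (t : ℤ) :
    Subgroup (State C t × A t × State C (t + 1)) :=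
  (beta C t).range

/-- `β^t` with codomain restricted to the branch group `B^t`. -/
def betaRes (C : Subgroup (∀ t, A t)) (t : ℤ) : ↥C →* ↥(Branch C t) :=
  (beta C t).rangeRestrict

/-- `X_j^t = β^t(C^{(t−j)+})` as a subgroup of the branch group `B^t`. -/
def X (C : Subgroup (∀ t, A t)) (j t : ℤ) : Subgroup ↥(Branch C t) :=
  (Cplus C (t - j)).map (betaRes C t)

/-- `Y_i^t = β^t(C^{(t+i+1)−})` as a subgroup of the branch group `B^t`. -/
def Y (C : Subgroup (∀ t, A t)) (i t : ℤ) : Subgroup ↥(Branch C t) :=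
  (Cminus C (t + i + 1)).map (betaRes C t)

instance X_normal (C : Subgroup (∀ t, A t)) (j t : ℤ) : (X C j t).Normal :=
  (Cplus_normal C (t - j)).map _ (MonoidHom.rangeRestrict_surjective _)

instance Y_normal (C : Subgroup (∀ t, A t)) (i t : ℤ) : (Y C i t).Normal :=
  (Cminus_normal C (t + i + 1)).map _ (MonoidHom.rangeRestrict_surjective _)

/-- `Δ_k^t = X_0^t ∩ Y_k^t`. -/
def Del (C : Subgroup (∀ t, A t)) (k t : ℤ) : Subgroup ↥(Branch C t) :=
  X C 0 t ⊓ Y C k t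

/-- `D_k^t = {a ∈ C : β^t(a) ∈ Δ_k^t}`. -/
def D (C : Subgroup (∀ t, A t)) (k t : ℤ) : Subgroup ↥C :=
  (Del C k t).comap (betaRes C t)

/-- Following-branch operator: for `S ⊆ B^{t₁}`,
`FSet C t₁ t₂ S = {β^{t₂}(a) : a ∈ C, β^{t₁}(a) ∈ S}`. -/
def FSet (C : Subgroup (∀ t, A t)) (t₁ t₂ : ℤ) (S : Set ↥(Branch C t₁)) :
    Set ↥(Branch C t₂) :=
  {x | ∃ a : ↥C, betaRes C t₁ a ∈ S ∧ betaRes C t₂ a = x}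

/-- `π^{[t,t+k]} : C → B^t × ⋯ × B^{t+k}`, `a ↦ (β^t(a), …, β^{t+k}(a))`. -/
def piSeg (C : Subgroup (∀ t, A t)) (t : ℤ) (k : ℕ) :
    ↥C →* ∀ j : Fin (k + 1), ↥(Branch C (t + ((j : ℕ) : ℤ))) where
  toFun a := fun j => betaRes C (t + ((j : ℕ) : ℤ)) a
  map_one' := by funext j; simp
  map_mul' a b := by funext j; simp

/-- `π^{[t,t+k]}(D_m^t)`. -/
def Pseg (C : Subgroup (∀ t, A t)) (t : ℤ) (k : ℕ) (m : ℤ) :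
    Subgroup (∀ j : Fin (k + 1), ↥(Branch C (t + ((j : ℕ) : ℤ)))) :=
  (D C m t).map (piSeg C t k)

/-- `β^{t+j}(D_m^t)` : the image of `D_m^t` in the branch group at time `t + j`. -/
def Qb (C : Subgroup (∀ t, A t)) (t m j : ℤ) : Subgroup ↥(Branch C (t + j)) :=
  (D C m t).map (betaRes C (t + j))

/-- The normal subgroup `C^{[t,t+k−1]}C^{[t+1,t+k]}` of `C` (denominator of the granule). -/
def granN (C : Subgroup (∀ t, A t)) (t : ℤ) (k : ℕ) : Subgroup ↥C :=
  Cint C t (t + k - 1) ⊔ Cint C (t + 1) (t + k)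

instance granN_normal (C : Subgroup (∀ t, A t)) (t : ℤ) (k : ℕ) : (granN C t k).Normal :=
  Subgroup.sup_normal _ _

lemma mem_D_of_mem_Cint (C : Subgroup (∀ t, A t)) (t : ℤ) (k : ℕ) {a : ↥C}
    (ha : a ∈ Cint C t (t + k)) : a ∈ D C (k : ℤ) t := by
  rcases Subgroup.mem_inf.mp ha with ⟨h1, h2⟩
  refine Subgroup.mem_comap.mpr (Subgroup.mem_inf.mpr ⟨?_, ?_⟩)
  · exact Subgroup.mem_map.mpr ⟨a, by simpa using h1, rfl⟩
  · exact Subgroup.mem_map.mpr ⟨a, h2, rfl⟩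

/-- `ℓ`-controllability of the group system `C`. -/
def Controllable (C : Subgroup (∀ t, A t)) (ℓ : ℕ) : Prop :=
  ∀ a b : ↥C, ∀ t : ℤ, ∃ c : ↥C,
    (∀ n < t, (c : ∀ s, A s) n = (a : ∀ s, A s) n) ∧
    (∀ n, t + (ℓ : ℤ) ≤ n → (c : ∀ s, A s) n = (b : ∀ s, A s) n)


/-!
All the quotients are images of `D_k^t/D_{k−1}^t`. A homomorphism `f` on `C` induces an isomorphism
`D_k^t/D_{k−1}^t ≃ f(D_k^t)/f(D_{k−1}^t)` as soon as `D_k^t ∩ ker f ≤ D_{k−1}^t`. For `f = β^{t+j}`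
this follows from `ker β^s = C^{s−}C^{(s+1)+}`: the factor `C^{(t+j+1)+}` lies in `ker β^t` because
`0 ≤ j`, and `β^t` maps the factor `C^{(t+j)−}` into `Y_{k−1}^t` because `j ≤ k`.
-/

section QuotientMap

variable {G H : Type*} [Group G] [Group H]

lemma map_subgroupOf_map_normal (f : G →* H) {N E : Subgroup G}
    (hE : E ≤ Subgroup.normalizer N) : ((N.map f).subgroupOf (E.map f)).Normal :=
  Subgroup.normal_subgroupOf_of_le_normalizer <|
    (Subgroup.map_mono hE).trans (Subgroup.le_normalizer_map f)

lemma comap_subgroupMap_map_subgroupOf (f : G →* H) {N E : Subgroup G} (hNE : N ≤ E)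
    (hker : E ⊓ f.ker ≤ N) :
    ((N.map f).subgroupOf (E.map f)).comap (f.subgroupMap E) = N.subgroupOf E := by
  ext ⟨x, hx⟩
  refine ⟨?_, fun hxN => ⟨x, hxN, rfl⟩⟩
  rintro ⟨n, hn, hnx : f n = f x⟩
  have hquot : n⁻¹ * x ∈ N :=
    hker ⟨E.mul_mem (E.inv_mem (hNE hn)) hx, f.eq_iff.mp hnx.symm⟩
  exact (N.mul_mem_cancel_left (N.inv_mem hn)).mp hquot

/-- The isomorphism `E/N ≃ f(E)/f(N)` induced by a homomorphism `f` whose kernel meets `E`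
inside `N`. The images are passed as subgroups `E'`, `N'` with equations, so that it also applies
to subgroups that are images only propositionally. -/
noncomputable def quotientEquivOfMapEq (f : G →* H) {N E : Subgroup G} {N' E' : Subgroup H}
    [(N.subgroupOf E).Normal] [(N'.subgroupOf E').Normal] (hNE : N ≤ E) (hker : E ⊓ f.ker ≤ N)
    (hE : E.map f = E') (hN : N.map f = N') : E ⧸ N.subgroupOf E ≃* E' ⧸ N'.subgroupOf E' := by
  subst hE hN
  refine QuotientGroup.liftEquiv
    (φ := (QuotientGroup.mk' ((N.map f).subgroupOf (E.map f))).comp (f.subgroupMap E)) _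
    ((QuotientGroup.mk'_surjective _).comp (f.subgroupMap_surjective E)) ?_
  rw [← MonoidHom.comap_ker, QuotientGroup.ker_mk', comap_subgroupMap_map_subgroupOf f hNE hker]

end QuotientMap

section Kernels

variable (C : Subgroup (∀ t, A t)) {i j k t : ℤ}

lemma Cplus_anti : Antitone (Cplus C) := fun _ _ h _ ha n hn => ha n (hn.trans_le h)

lemma Cminus_mono : Monotone (Cminus C) := fun _ _ h _ ha n hn => ha n (h.trans hn)

lemma Cminus_le_ker_evalHom (t : ℤ) : Cminus C t ≤ (evalHom C t).ker := fun _ ha => ha t le_rfl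

lemma Cplus_inf_ker_evalHom (t : ℤ) : Cplus C t ⊓ (evalHom C t).ker = Cplus C (t + 1) := by
  refine le_antisymm ?_ fun a ha => ⟨Cplus_anti C (by lia) ha, ha t (by lia)⟩
  rintro a ⟨hbefore, hat⟩ n hn
  obtain hlt | rfl := (Int.lt_add_one_iff.mp hn).lt_or_eq
  exacts [hbefore n hlt, hat]

lemma stateN_inf_ker_evalHom (t : ℤ) :
    stateN C t ⊓ (evalHom C t).ker = Cminus C t ⊔ Cplus C (t + 1) := by
  rw [← Cplus_inf_ker_evalHom]
  refine le_antisymm ?_ (le_inf (sup_le_sup_left inf_le_left _)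
    (sup_le (Cminus_le_ker_evalHom C t) inf_le_right))
  rintro _ ⟨hstate, heval⟩
  obtain ⟨m, hm, p, hp, rfl⟩ := Subgroup.mem_sup_of_normal_left.mp hstate
  have hp' : p ∈ (evalHom C t).ker :=
    (Subgroup.mul_mem_cancel_left _ (Cminus_le_ker_evalHom C t hm)).mp heval
  exact Subgroup.mul_mem_sup hm ⟨hp, hp'⟩

lemma ker_betaRes (t : ℤ) : (betaRes C t).ker = Cminus C t ⊔ Cplus C (t + 1) := by
  have hker : (betaRes C t).ker =
      (stateN C t ⊓ (evalHom C t).ker) ⊓ stateN C (t + 1) := by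
    refine (MonoidHom.ker_rangeRestrict _).trans ?_
    simp only [beta, sigma, MonoidHom.ker_prod, QuotientGroup.ker_mk', inf_assoc]
  rw [hker, stateN_inf_ker_evalHom, inf_eq_left]
  exact sup_le_sup_right (Cminus_mono C (by lia)) _

lemma ker_betaRes_le_comap_Y (hj : 0 ≤ j) (hji : j ≤ i + 1) :
    (betaRes C (t + j)).ker ≤ (Y C i t).comap (betaRes C t) := by
  rw [Y, Subgroup.comap_map_eq, ker_betaRes, ker_betaRes]
  exact sup_le_sup (Cminus_mono C (by lia)) (le_sup_of_le_right (Cplus_anti C (by lia)))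

lemma D_inf_ker_betaRes_le (hj : 0 ≤ j) (hji : j ≤ i + 1) :
    D C k t ⊓ (betaRes C (t + j)).ker ≤ D C i t :=
  inf_le_inf (Subgroup.comap_mono inf_le_left) (ker_betaRes_le_comap_Y C hj hji)

lemma ker_piSeg_le (n : ℕ) (j : Fin (n + 1)) :
    (piSeg C t n).ker ≤ (betaRes C (t + (j : ℕ))).ker := fun _ ha => congrFun ha j

end Kernels

section Quotients

variable (C : Subgroup (∀ t, A t)) {i j k t : ℤ}

instance Del_normal : (Del C k t).Normal := inferInstanceAs (X C 0 t ⊓ Y C k t).Normal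

instance D_normal : (D C k t).Normal := inferInstanceAs ((Del C k t).comap (betaRes C t)).Normal

instance Qb_normal : (Qb C t k j).Normal :=
  (D_normal C).map _ (MonoidHom.rangeRestrict_surjective _)

instance Pseg_subgroupOf_normal (n : ℕ) : ((Pseg C t n i).subgroupOf (Pseg C t n k)).Normal :=
  map_subgroupOf_map_normal _ Subgroup.le_normalizer_of_normal

lemma D_mono : Monotone fun k => D C k t := fun _ _ h =>
  Subgroup.comap_mono (inf_le_inf_left _ (Subgroup.map_mono (Cminus_mono C (by lia))))

lemma map_betaRes_D : (D C k t).map (betaRes C t) = Del C k t :=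
  Subgroup.map_comap_eq_self_of_surjective (MonoidHom.rangeRestrict_surjective _) _

/-- `D_k^t/D_i^t ≃ Δ_k^t/Δ_i^t`, induced by `β^t`. -/
noncomputable def quotientDEquivDel (hik : i ≤ k) :
    D C k t ⧸ (D C i t).subgroupOf (D C k t) ≃* Del C k t ⧸ (Del C i t).subgroupOf (Del C k t) :=
  quotientEquivOfMapEq (betaRes C t) (D_mono C hik)
    (inf_le_right.trans (MonoidHom.ker_le_comap _ _)) (map_betaRes_D C) (map_betaRes_D C)

/-- `D_k^t/D_i^t ≃ π^{[t,t+n]}(D_k^t)/π^{[t,t+n]}(D_i^t)`, induced by `π^{[t,t+n]}`. -/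
noncomputable def quotientDEquivPseg (n : ℕ) (hi : 0 ≤ i + 1) (hik : i ≤ k) :
    D C k t ⧸ (D C i t).subgroupOf (D C k t) ≃*
      Pseg C t n k ⧸ (Pseg C t n i).subgroupOf (Pseg C t n k) :=
  quotientEquivOfMapEq (piSeg C t n) (D_mono C hik)
    ((inf_le_inf_left _ (ker_piSeg_le C n 0)).trans
      (D_inf_ker_betaRes_le C le_rfl hi)) rfl rfl

/-- `D_k^t/D_i^t ≃ β^{t+j}(D_k^t)/β^{t+j}(D_i^t)`, induced by `β^{t+j}`. -/
noncomputable def quotientDEquivQb (hik : i ≤ k) (hj : 0 ≤ j) (hji : j ≤ i + 1) :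
    D C k t ⧸ (D C i t).subgroupOf (D C k t) ≃*
      Qb C t k j ⧸ (Qb C t i j).subgroupOf (Qb C t k j) :=
  quotientEquivOfMapEq (betaRes C (t + j)) (D_mono C hik) (D_inf_ker_betaRes_le C hj hji) rfl rfl

end Quotients

/-- `Δ_{k−1}^t` is normal in `Δ_k^t`, and for every `0 ≤ j ≤ k` there are
isomorphisms `Δ_k^t/Δ_{k−1}^t ≅ π^{[t,t+k]}(D_k^t)/π^{[t,t+k]}(D_{k−1}^t)
≅ β^{t+j}(D_k^t)/β^{t+j}(D_{k−1}^t)`; in particular all the latter quotients, for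
`0 ≤ j ≤ k`, have the same cardinality. -/
theorem statement15 (C : Subgroup (∀ t, A t)) (t : ℤ) (k : ℕ) (hk : 1 ≤ k) :
    ((Del C ((k : ℤ) - 1) t).subgroupOf (Del C (k : ℤ) t)).Normal ∧
    (∀ j : ℕ, j ≤ k →
      ((Pseg C t k ((k : ℤ) - 1)).subgroupOf (Pseg C t k (k : ℤ))).Normal ∧
      ((Qb C t ((k : ℤ) - 1) (j : ℤ)).subgroupOf (Qb C t (k : ℤ) (j : ℤ))).Normal ∧
      ∀ (h0 : ((Del C ((k : ℤ) - 1) t).subgroupOf (Del C (k : ℤ) t)).Normal)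
        (h1 : ((Pseg C t k ((k : ℤ) - 1)).subgroupOf (Pseg C t k (k : ℤ))).Normal)
        (h2 : ((Qb C t ((k : ℤ) - 1) (j : ℤ)).subgroupOf (Qb C t (k : ℤ) (j : ℤ))).Normal),
        haveI := h0
        haveI := h1
        haveI := h2
        Nonempty
          ((↥(Del C (k : ℤ) t) ⧸ (Del C ((k : ℤ) - 1) t).subgroupOf (Del C (k : ℤ) t)) ≃*
           (↥(Pseg C t k (k : ℤ)) ⧸
              (Pseg C t k ((k : ℤ) - 1)).subgroupOf (Pseg C t k (k : ℤ)))) ∧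
        Nonempty
          ((↥(Pseg C t k (k : ℤ)) ⧸
              (Pseg C t k ((k : ℤ) - 1)).subgroupOf (Pseg C t k (k : ℤ))) ≃*
           (↥(Qb C t (k : ℤ) (j : ℤ)) ⧸
              (Qb C t ((k : ℤ) - 1) (j : ℤ)).subgroupOf (Qb C t (k : ℤ) (j : ℤ))))) ∧
    (∀ j j' : ℕ, j ≤ k → j' ≤ k →
      Nat.card
          (↥(Qb C t (k : ℤ) (j : ℤ)) ⧸
            (Qb C t ((k : ℤ) - 1) (j : ℤ)).subgroupOf (Qb C t (k : ℤ) (j : ℤ))) =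
        Nat.card
          (↥(Qb C t (k : ℤ) (j' : ℤ)) ⧸
            (Qb C t ((k : ℤ) - 1) (j' : ℤ)).subgroupOf (Qb C t (k : ℤ) (j' : ℤ)))) := by
  have hpred : (k : ℤ) - 1 ≤ k := by lia
  have eQb (j : ℕ) (hj : j ≤ k) := quotientDEquivQb C (t := t) hpred (Int.natCast_nonneg j) (by lia)
  refine ⟨inferInstance, fun j hj => ⟨inferInstance, inferInstance, fun _ _ _ => ?_⟩,
    fun j j' hj hj' => Nat.card_congr ((eQb j hj).symm.trans (eQb j' hj')).toEquiv⟩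
  have eDel := quotientDEquivDel C (t := t) hpred
  have ePseg := quotientDEquivPseg C (t := t) k (by lia) hpred
  exact ⟨⟨eDel.symm.trans ePseg⟩, ⟨ePseg.symm.trans (eQb j hj)⟩⟩

end GroupSystemPaper
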